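/- arXiv:2103.01528 — 6 statements merged into one kernel-verified Lean document; each statement's English description precedes it below -/
import Mathlib

section
/- Let n ≥ 3. For every drone tour and every intermediate node i ∈ {1, …, n}, the lifted Miller–Tucker–Zemlin inequality (DL-1) holds: 1 + (1 − x_{0i}) + (n − 2)·x_{i,n+1} ≤ u(i) ≤ (n + 1) − (n − 1)·x_{0i} − (1 − x_{i,n+1}). -/
/-- Arc indicator of a drone tour on the node set `H = {0, 1, …, n+1}` (modelled as
`Fin (n+2)`): `xind n u i j = 1` iff `(i,j)` is in the arc set
`A = {(i,j) : i ≠ j, i ≠ n+1, j ≠ 0}` and `j` is visited immediately after `i`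
(i.e. `u j = u i + 1`); by convention it is `0` for pairs outside `A`. -/
def xind (n : ℕ) (u : Fin (n + 2) → Fin (n + 2)) (i j : Fin (n + 2)) : ℤ :=
  if i ≠ j ∧ i ≠ Fin.last (n + 1) ∧ j ≠ 0 ∧ (u j : ℕ) = (u i : ℕ) + 1 then 1 else 0

/-- Proposition 2 (constraint DL-1): for every drone tour (a bijection `u` of
`{0,…,n+1}` with `u 0 = 0` and `u (n+1) = n+1`) and every intermediate node `i`,
`1 + (1 − x_{0i}) + (n − 2)·x_{i,n+1} ≤ u(i) ≤ (n+1) − (n−1)·x_{0i} − (1 − x_{i,n+1})`. -/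
theorem dl1_valid (n : ℕ) (hn : 3 ≤ n)
    (u : Fin (n + 2) → Fin (n + 2)) (hu : Function.Bijective u)
    (h0 : u 0 = 0) (hlast : u (Fin.last (n + 1)) = Fin.last (n + 1))
    (i : Fin (n + 2)) (hi0 : i ≠ 0) (hil : i ≠ Fin.last (n + 1)) :
    1 + (1 - xind n u 0 i) + ((n : ℤ) - 2) * xind n u i (Fin.last (n + 1)) ≤ (u i : ℤ) ∧
    (u i : ℤ) ≤ ((n : ℤ) + 1) - ((n : ℤ) - 1) * xind n u 0 i
        - (1 - xind n u i (Fin.last (n + 1))) := by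
  have hne0 : (u i : ℕ) ≠ 0 := by
    intro h
    apply hi0
    apply hu.1
    rw [h0]
    exact Fin.ext (by simpa using h)
  have hnel : (u i : ℕ) ≠ n + 1 := by
    intro h
    apply hil
    apply hu.1
    rw [hlast]
    exact Fin.ext (by simpa using h)
  have hlt := (u i).isLt
  have e0 : xind n u 0 i = if (u i : ℕ) = 1 then 1 else 0 := by
    have h1 : (0 : Fin (n + 2)) ≠ Fin.last (n + 1) := by
      intro h
      have := congrArg Fin.val h
      simp at this
    unfold xind
    simp [h0, hi0, hi0.symm, h1]
  have e1 : xind n u i (Fin.last (n + 1)) = if (u i : ℕ) = n then 1 else 0 := by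
    have h1 : Fin.last (n + 1) ≠ (0 : Fin (n + 2)) := by
      intro h
      have := congrArg Fin.val h
      simp at this
    unfold xind
    simp [hlast, hil, h1, eq_comm]
  rw [e0, e1]
  split_ifs <;> constructor <;> simp <;> omega
end

section
/- Let n ≥ 3. For every drone tour and every arc (i,j) ∈ A with i ≠ 0, the lifted Miller–Tucker–Zemlin inequality (DL-2) holds: u(i) − u(j) + (n + 1)·x_{ij} + (n − 1)·x_{ji} ≤ n. -/
/-- Proposition 2 (constraint DL-2): for every drone tour and every arc `(i,j) ∈ A`
with `i ≠ 0`, `u(i) − u(j) + (n+1)·x_{ij} + (n−1)·x_{ji} ≤ n`. -/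
theorem dl2_valid (n : ℕ) (hn : 3 ≤ n)
    (u : Fin (n + 2) → Fin (n + 2)) (hu : Function.Bijective u)
    (h0 : u 0 = 0) (hlast : u (Fin.last (n + 1)) = Fin.last (n + 1))
    (i j : Fin (n + 2)) (hij : i ≠ j) (hi : i ≠ Fin.last (n + 1)) (hj : j ≠ 0)
    (hi0 : i ≠ 0) :
    (u i : ℤ) - (u j : ℤ) + ((n : ℤ) + 1) * xind n u i j
      + ((n : ℤ) - 1) * xind n u j i ≤ (n : ℤ) := by
  have hi' : (u i : ℕ) ≠ n + 1 := by
    intro h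
    exact hi (hu.1 (by rw [hlast]; ext; simpa using h))
  have hj' : (u j : ℕ) ≠ 0 := by
    intro h
    exact hj (hu.1 (by rw [h0]; ext; simpa using h))
  have hil := (u i).isLt
  have hjl := (u j).isLt
  unfold xind
  split_ifs with h1 h2 h2 <;> omega
end

section
/- Let n ≥ 3. For every drone tour and every node i ∈ H with i ≠ n+1, the Reformulation–Linearization identity (SD-1) holds: Σ_{j : (i,j) ∈ A, j ≠ n+1} y_{ij} + n·x_{i,n+1} = u(i). -/
/-- Proposition 3 (constraint SD-1): for every drone tour and every node `i ≠ n+1`,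
`Σ_{j : (i,j) ∈ A, j ≠ n+1} y_{ij} + n·x_{i,n+1} = u(i)`, where the RLT auxiliary
variables are `y_{ij} = u(i)·x_{ij}`. -/
theorem sd1_valid (n : ℕ) (hn : 3 ≤ n)
    (u : Fin (n + 2) → Fin (n + 2)) (hu : Function.Bijective u)
    (h0 : u 0 = 0) (hlast : u (Fin.last (n + 1)) = Fin.last (n + 1))
    (i : Fin (n + 2)) (hi : i ≠ Fin.last (n + 1)) :
    (∑ j ∈ Finset.univ.filter
        (fun j : Fin (n + 2) => i ≠ j ∧ j ≠ 0 ∧ j ≠ Fin.last (n + 1)),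
        (u i : ℤ) * xind n u i j)
      + (n : ℤ) * xind n u i (Fin.last (n + 1)) = (u i : ℤ) := by
  have hlt : (u i : ℕ) < n + 1 := by
    have h1 : u i ≠ Fin.last (n + 1) := fun h => hi (hu.1 (h.trans hlast.symm))
    have h2 : (u i : ℕ) ≠ n + 1 := fun h => h1 (Fin.ext (by simpa using h))
    have := (u i).isLt
    omega
  obtain ⟨k, hk⟩ := hu.2 ⟨(u i : ℕ) + 1, by omega⟩
  have hkv : (u k : ℕ) = (u i : ℕ) + 1 := by rw [hk]
  have hki : i ≠ k := by
    rintro rfl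
    omega
  have hk0 : k ≠ 0 := by
    rintro rfl
    rw [h0] at hkv
    simp at hkv
  have hx : ∀ j, xind n u i j = if j = k then 1 else 0 := by
    intro j
    unfold xind
    by_cases hj : j = k
    · subst hj
      simp [hki, hi, hk0, hkv]
    · have : ¬ ((u j : ℕ) = (u i : ℕ) + 1) := fun h =>
        hj (hu.1 (Fin.ext (h.trans hkv.symm)))
      simp [this, hj]
  simp only [hx, mul_ite, mul_one, mul_zero, Finset.sum_ite_eq', Finset.mem_filter,
    Finset.mem_univ, true_and]
  by_cases hl : k = Fin.last (n + 1)
  · have : (u i : ℕ) = n := by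
      rw [hl, hlast] at hkv
      simp at hkv
      omega
    simp [hl, this]
  · simp [hki, hk0, hl, Ne.symm hl]
end

section
/- Let n ≥ 3. For every drone tour and every arc (i,j) ∈ A with i ≠ 0, the Reformulation–Linearization inequalities (SD-4) hold: u(i) + (n + 1)·(x_{ij} − 1) + n·x_{ji} ≤ y_{ij} + y_{ji} ≤ u(i) − (1 − x_{ij}), where y_{ji} = u(j)·x_{ji} and x_{ji} = 0 whenever (j,i) ∉ A. -/
/-- Proposition 3 (constraint SD-4): for every drone tour and every arc `(i,j) ∈ A`
with `i ≠ 0`,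
`u(i) + (n+1)·(x_{ij} − 1) + n·x_{ji} ≤ y_{ij} + y_{ji} ≤ u(i) − (1 − x_{ij})`,
where `y_{ij} = u(i)·x_{ij}` and `y_{ji} = u(j)·x_{ji}`. -/
theorem sd4_valid (n : ℕ) (hn : 3 ≤ n)
    (u : Fin (n + 2) → Fin (n + 2)) (hu : Function.Bijective u)
    (h0 : u 0 = 0) (hlast : u (Fin.last (n + 1)) = Fin.last (n + 1))
    (i j : Fin (n + 2)) (hij : i ≠ j) (hi : i ≠ Fin.last (n + 1)) (hj : j ≠ 0)
    (hi0 : i ≠ 0) :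
    (u i : ℤ) + ((n : ℤ) + 1) * (xind n u i j - 1) + (n : ℤ) * xind n u j i ≤
        (u i : ℤ) * xind n u i j + (u j : ℤ) * xind n u j i ∧
    (u i : ℤ) * xind n u i j + (u j : ℤ) * xind n u j i ≤
        (u i : ℤ) - (1 - xind n u i j) := by
  have hpos : 1 ≤ (u i : ℕ) := by
    rcases Nat.eq_zero_or_pos (u i : ℕ) with h | h
    · exact absurd (hu.1 ((Fin.ext (by simpa using h) : u i = 0).trans h0.symm)) hi0
    · exact h
  have hle := (u i).isLt
  unfold xind
  split_ifs with h1 h2 h2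
  · omega
  · constructor <;> push_cast <;> linarith
  · have := h2.2.2.2
    constructor <;> push_cast <;> omega
  · constructor <;> push_cast <;> omega
end

section
/- Let n ≥ 1, let H = {0, 1, …, n+1}, and let A = {(i,j) : i, j ∈ H, i ≠ j, i ≠ n+1, j ≠ 0}. Suppose x : A → {0,1} satisfies the degree constraints Σ_{j : (i,j) ∈ A} x_{ij} = 1 for every i ∈ H with i ≠ n+1 and Σ_{i : (i,j) ∈ A} x_{ij} = 1 for every j ∈ H with j ≠ 0, and suppose there exists u : H → ℝ such that u(j)·x_{ij} = (u(i) + 1)·x_{ij} for every (i,j) ∈ A. Then the arcs {(i,j) ∈ A : x_{ij} = 1} form a directed Hamiltonian path from 0 to n+1; that is, there is an enumeration v_0 = 0, v_1, …, v_{n+1} = n+1 of all nodes of H such that x_{v_k v_{k+1}} = 1 for k = 0, …, n and x_{ij} = 0 for every other arc (i,j) ∈ A. In particular, the arc set selected by x contains no directed subtour (cycle). -/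
/-- The arc set `A = {(i,j) : i, j ∈ H, i ≠ j, i ≠ n+1, j ≠ 0}` on the node set
`H = {0, 1, …, n+1}` (modelled as `Fin (n+2)`). -/
def arc (n : ℕ) (i j : Fin (n + 2)) : Prop :=
  i ≠ j ∧ i ≠ Fin.last (n + 1) ∧ j ≠ 0

instance (n : ℕ) (i j : Fin (n + 2)) : Decidable (arc n i j) := by
  unfold arc; infer_instance

theorem exists_unique_of_sum_one {α : Type*} [DecidableEq α] (S : Finset α) (g : α → ℝ)
    (h01 : ∀ a ∈ S, g a = 0 ∨ g a = 1) (hs : ∑ a ∈ S, g a = 1) :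
    ∃ a ∈ S, g a = 1 ∧ ∀ b ∈ S, g b = 1 → b = a := by
  have h1 : ∃ a ∈ S, g a = 1 := by
    by_contra! hc
    have : ∑ a ∈ S, g a = 0 :=
      Finset.sum_eq_zero fun a ha => (h01 a ha).resolve_right (hc a ha)
    linarith
  obtain ⟨a, ha, hga⟩ := h1
  refine ⟨a, ha, hga, fun b hb hgb => ?_⟩
  by_contra hne
  have h2 : ∑ c ∈ ({a, b} : Finset α), g c ≤ ∑ c ∈ S, g c := by
    apply Finset.sum_le_sum_of_subset_of_nonneg
    · intro c hc
      simp only [Finset.mem_insert, Finset.mem_singleton] at hc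
      rcases hc with rfl | rfl <;> assumption
    · intro c hc _
      rcases h01 c hc with h | h <;> rw [h] <;> norm_num
  rw [Finset.sum_pair (Ne.symm hne)] at h2
  linarith

/-- Claim in the proof of Proposition 3: the quadratic rank constraints
`u(j)·x_{ij} = (u(i)+1)·x_{ij}` for all arcs, together with the out-degree-one and
in-degree-one constraints, force the arcs selected by the binary variables `x` to form
a directed Hamiltonian path from node `0` to node `n+1`; in particular, no directed
subtour is selected. -/
theorem rank_constraints_give_hamiltonian_path (n : ℕ) (hn : 1 ≤ n)
    (x : Fin (n + 2) → Fin (n + 2) → ℝ)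
    (hx01 : ∀ i j, arc n i j → x i j = 0 ∨ x i j = 1)
    (hdeg_out : ∀ i : Fin (n + 2), i ≠ Fin.last (n + 1) →
      ∑ j ∈ Finset.univ.filter (fun j => arc n i j), x i j = 1)
    (hdeg_in : ∀ j : Fin (n + 2), j ≠ 0 →
      ∑ i ∈ Finset.univ.filter (fun i => arc n i j), x i j = 1)
    (u : Fin (n + 2) → ℝ)
    (hrank : ∀ i j, arc n i j → u j * x i j = (u i + 1) * x i j) :
    ∃ v : Fin (n + 2) → Fin (n + 2),
      Function.Bijective v ∧
      v 0 = 0 ∧ v (Fin.last (n + 1)) = Fin.last (n + 1) ∧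
      (∀ k : Fin (n + 1), x (v k.castSucc) (v k.succ) = 1) ∧
      (∀ i j, arc n i j → x i j = 1 →
        ∃ k : Fin (n + 1), i = v k.castSucc ∧ j = v k.succ) := by
  classical
  have hout : ∀ i : Fin (n + 2), i ≠ Fin.last (n + 1) →
      ∃ j, arc n i j ∧ x i j = 1 ∧ ∀ b, arc n i b → x i b = 1 → b = j := by
    intro i hi
    obtain ⟨a, ha, h1, h2⟩ := exists_unique_of_sum_one _ (fun j => x i j)
      (fun a ha => hx01 i a (by simpa using ha)) (hdeg_out i hi)
    exact ⟨a, by simpa using ha, h1, fun b hb => h2 b (by simpa using hb)⟩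
  have hin : ∀ j : Fin (n + 2), j ≠ 0 → ∀ a b, arc n a j → arc n b j →
      x a j = 1 → x b j = 1 → a = b := by
    intro j hj a b ha hb hxa hxb
    obtain ⟨c, hc, h1, h2⟩ := exists_unique_of_sum_one _ (fun i => x i j)
      (fun a ha => hx01 a j (by simpa using ha)) (hdeg_in j hj)
    rw [h2 a (by simpa using ha) hxa, h2 b (by simpa using hb) hxb]
  have hf : ∀ i : Fin (n + 2), ∃ j, (i = Fin.last (n + 1) → j = 0) ∧
      (i ≠ Fin.last (n + 1) → arc n i j ∧ x i j = 1 ∧ ∀ b, arc n i b → x i b = 1 → b = j) := by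
    intro i
    by_cases hi : i = Fin.last (n + 1)
    · exact ⟨0, fun _ => rfl, fun h => absurd hi h⟩
    · obtain ⟨j, hj⟩ := hout i hi
      exact ⟨j, fun h => absurd h hi, fun _ => hj⟩
  choose f hf0 hf1 using hf
  have hlast : f (Fin.last (n + 1)) = 0 := hf0 _ rfl
  have hinj : Function.Injective f := by
    intro a b hab
    by_cases ha : a = Fin.last (n + 1) <;> by_cases hb : b = Fin.last (n + 1)
    · rw [ha, hb]
    · exact absurd (hab.symm.trans (hf0 a ha)) (hf1 b hb).1.2.2
    · exact absurd (hab.trans (hf0 b hb)) (hf1 a ha).1.2.2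
    · obtain ⟨a1, a2, -⟩ := hf1 a ha
      obtain ⟨b1, b2, -⟩ := hf1 b hb
      rw [← hab] at b1 b2
      exact hin (f a) a1.2.2 a b a1 b1 a2 b2
  have hu : ∀ i, i ≠ Fin.last (n + 1) → u (f i) = u i + 1 := by
    intro i hi
    obtain ⟨a1, a2, -⟩ := hf1 i hi
    have := hrank _ _ a1
    rw [a2] at this
    linarith
  have huk : ∀ i m, (∀ k < m, f^[k] i ≠ Fin.last (n + 1)) → ∀ k ≤ m, u (f^[k] i) = u i + k := by
    intro i m h k
    induction k with
    | zero => simp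
    | succ k ih =>
      intro hk
      rw [Function.iterate_succ_apply', hu _ (h k (by omega)), ih (by omega)]
      push_cast
      ring
  have hreach : ∀ i, ∃ k, f^[k] i = Fin.last (n + 1) := by
    intro i
    by_contra! hc
    refine not_injective_infinite_finite (fun k : ℕ => f^[k] i) fun a b hab => ?_
    have ha := huk i a (fun k _ => hc k) a le_rfl
    have hb := huk i b (fun k _ => hc k) b le_rfl
    simp only at hab
    rw [hab, hb] at ha
    have : (b : ℝ) = a := by linarith
    exact_mod_cast this.symm
  obtain ⟨m, hm, hmin⟩ : ∃ m, f^[m] 0 = Fin.last (n + 1) ∧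
      ∀ k < m, f^[k] 0 ≠ Fin.last (n + 1) :=
    ⟨Nat.find (hreach 0), Nat.find_spec (hreach 0), fun k hk => Nat.find_min (hreach 0) hk⟩
  have hS : ∀ j i, f^[j] i = Fin.last (n + 1) → ∃ k ≤ m, f^[k] 0 = i := by
    intro j
    induction j with
    | zero => intro i hi; exact ⟨m, le_rfl, by rw [hm]; exact hi.symm⟩
    | succ j ih =>
      intro i hi
      obtain ⟨k, hk, hki⟩ := ih (f i) hi
      cases k with
      | zero => exact ⟨m, le_rfl, by rw [hm]; exact hinj (hlast.trans hki)⟩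
      | succ k =>
        rw [Function.iterate_succ_apply'] at hki
        exact ⟨k, by omega, hinj hki⟩
  have hsurj : Function.Surjective (fun k : Fin (m + 1) => f^[(k : ℕ)] 0) := by
    intro i
    obtain ⟨j, hj⟩ := hreach i
    obtain ⟨k, hk, hki⟩ := hS j i hj
    exact ⟨⟨k, by omega⟩, hki⟩
  have hinj2 : Function.Injective (fun k : Fin (m + 1) => f^[(k : ℕ)] 0) := by
    intro a b hab
    have ha := huk 0 m hmin a (by omega)
    have hb := huk 0 m hmin b (by omega)
    simp only at hab
    rw [hab, hb] at ha
    have : (b : ℝ) = a := by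
      have h3 : ((b : ℕ) : ℝ) = ((a : ℕ) : ℝ) := by linarith
      exact_mod_cast h3
    ext
    exact_mod_cast this.symm
  have hcard := Fintype.card_of_bijective ⟨hinj2, hsurj⟩
  simp only [Fintype.card_fin] at hcard
  obtain rfl : m = n + 1 := by omega
  refine ⟨fun k => f^[(k : ℕ)] 0, ⟨hinj2, hsurj⟩, rfl, by simpa using hm, ?_, ?_⟩
  · intro k
    have := (hf1 (f^[(k : ℕ)] 0) (hmin k k.2)).2.1
    simpa only [Fin.val_castSucc, Fin.val_succ, Function.iterate_succ_apply'] using this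
  · intro i j hij hx
    have hj := (hf1 i hij.2.1).2.2 j hij hx
    obtain ⟨k, hk⟩ := hsurj i
    simp only at hk
    have hkn : (k : ℕ) < n + 1 := by
      rcases Nat.lt_or_ge k (n + 1) with h | h
      · exact h
      · have : (k : ℕ) = n + 1 := by omega
        rw [this, hm] at hk
        exact absurd hk.symm hij.2.1
    refine ⟨⟨k, hkn⟩, hk.symm, ?_⟩
    simp only [Fin.val_succ, Function.iterate_succ_apply', hk, hj]
end

section
/- Let T_bl > 0 and T_s ≥ 0 be real numbers, and let U be a nonempty finite set (of nested units). For each u ∈ U, let D_u ≥ 0 (drone travel time), O_u ≥ 0 (observation time), W_u ≥ 0 (drone idling time), and δ_u ≥ 0 (wasted battery slack) be real numbers satisfying the battery-balance identity D_u + O_u + W_u + δ_u = T_bl. Define the mission makespan M = Σ_{u ∈ U} (D_u + O_u + W_u) + |U|·T_s. Then for any real numbers L ≥ 0 and Θ ≥ 0 with Σ_{u ∈ U} D_u ≥ L and Σ_{u ∈ U} O_u ≥ Θ, one has M ≥ L + Θ + ⌊(L + Θ)/T_bl⌋·T_s, where ⌊·⌋ denotes the floor function. -/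
/-- Theorem 3 of the paper (lower bound on the Nested-VRP mission makespan): if the
mission decomposes into a nonempty finite set `U` of nested units whose battery usage
satisfies `D_u + O_u + W_u + δ_u = T_bl` for every unit `u`, and the makespan is
`M = Σ_u (D_u + O_u + W_u) + |U|·T_s`, then for any nonnegative lower bounds `L` on the
total drone travel time and `Θ` on the total observation time one has
`M ≥ L + Θ + ⌊(L + Θ)/T_bl⌋·T_s`. -/
theorem nestedVRP_makespan_lower_bound
    (Tbl Ts : ℝ) (hTbl : 0 < Tbl) (hTs : 0 ≤ Ts)
    {U : Type*} [Fintype U] [Nonempty U]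
    (D O W δ : U → ℝ)
    (hD : ∀ u, 0 ≤ D u) (hO : ∀ u, 0 ≤ O u) (hW : ∀ u, 0 ≤ W u) (hδ : ∀ u, 0 ≤ δ u)
    (hbal : ∀ u, D u + O u + W u + δ u = Tbl)
    (M : ℝ) (hM : M = (∑ u, (D u + O u + W u)) + (Fintype.card U : ℝ) * Ts)
    (L Θ : ℝ) (hL : 0 ≤ L) (hΘ : 0 ≤ Θ)
    (hLD : L ≤ ∑ u, D u) (hΘO : Θ ≤ ∑ u, O u) :
    L + Θ + (⌊(L + Θ) / Tbl⌋ : ℝ) * Ts ≤ M := by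
  have h1 : L + Θ ≤ ∑ u, (D u + O u + W u) := by
    have hw : 0 ≤ ∑ u, W u := Finset.sum_nonneg fun u _ => hW u
    rw [Finset.sum_add_distrib, Finset.sum_add_distrib]
    linarith
  have h2 : ∑ u, (D u + O u + W u) ≤ (Fintype.card U : ℝ) * Tbl := by
    have h : ∑ u, (D u + O u + W u) ≤ ∑ _u : U, Tbl :=
      Finset.sum_le_sum fun u _ => by linarith [hbal u, hδ u]
    simpa using h
  have h3 : (L + Θ) / Tbl ≤ (Fintype.card U : ℝ) := by
    rw [div_le_iff₀ hTbl]
    linarith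
  have h4 : (⌊(L + Θ) / Tbl⌋ : ℝ) ≤ (Fintype.card U : ℝ) := (Int.floor_le _).trans h3
  have h5 := mul_le_mul_of_nonneg_right h4 hTs
  rw [hM]
  linarith
end
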